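/- arXiv:2210.16153 — 2 statements merged into one kernel-verified Lean document; each statement's English description precedes it below -/
import Mathlib

section
/- Let q > 1 be a real number and m a real number. For naturals n, x ≤ n and k, define the skew-q-Krawtchouk polynomial C_k(x,n;m) = Σ_{j=0}^{k} (−1)^j q^{2j(n−x)} q^{j(j−1)} [x;j] [n−x;k−j] γ(m−2j, k−j). Then for all naturals x ≤ n and k ≤ n, the recurrence C_{k+1}(x+1, n+1; m+2) = q^{2(k+1)} · C_{k+1}(x,n;m) − q^{2k} · C_k(x,n;m) holds. -/
/-- The skew-q-nary Gaussian coefficient `[x;k]` for real `x`. -/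
noncomputable def gaussQ (q x : ℝ) (k : ℕ) : ℝ :=
  ∏ i ∈ Finset.range k, (q ^ (2 * x) - q ^ (2 * (i : ℝ))) / (q ^ (2 * (k : ℝ)) - q ^ (2 * (i : ℝ)))

/-- The skew-q-nary Gamma function `γ(x,k)`. -/
noncomputable def skewGamma (q x : ℝ) (k : ℕ) : ℝ :=
  ∏ i ∈ Finset.range k, (q ^ x - q ^ (2 * (i : ℝ)))

/-- The skew-q-Krawtchouk polynomial `C_k(x,n;m)`. -/
noncomputable def CK (q m : ℝ) (n x k : ℕ) : ℝ :=
  ∑ j ∈ Finset.range (k + 1),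
    (-1 : ℝ) ^ j * q ^ (2 * j * (n - x)) * q ^ (j * (j - 1)) *
      gaussQ q (x : ℝ) j * gaussQ q ((n : ℝ) - (x : ℝ)) (k - j) *
      skewGamma q (m - 2 * (j : ℝ)) (k - j)

/-! Write `Q = q ^ 2` and `W = Q ^ (n - x)`. Everything rests on the identity
`γ(y + 2, l + 1) - Q ^ (l + 1) γ(y, l + 1) = Q ^ l (Q ^ (l + 1) - 1) γ(y, l)`.
At `y = 2x` and `l = j`, divided by `γ(2j + 2, j + 1) = Q ^ j (Q ^ (j + 1) - 1) γ(2j, j)`, it is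
the Pascal rule `[x + 1; j + 1] = [x; j] + Q ^ (j + 1) [x; j + 1]`, which splits
`C_{k+1}(x+1, n+1; m+2)` into two sums over the Gaussian coefficients of `x`. At `y = m - 2j`,
combined with `Q ^ l (Q ^ (l + 1) - 1) [n - x; l + 1] = (W - Q ^ l) [n - x; l]`, it turns `m + 2`
back into `m` in the first sum; the terms with `W` then cancel against the second.
-/

theorem rpow_two_mul_natCast (q : ℝ) (i : ℕ) : q ^ (2 * (i : ℝ)) = q ^ (2 * i) :=
  mod_cast Real.rpow_natCast q (2 * i)

@[simp]
theorem skewGamma_zero (q y : ℝ) : skewGamma q y 0 = 1 := by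
  simp [skewGamma]

theorem skewGamma_succ (q y : ℝ) (k : ℕ) :
    skewGamma q y (k + 1) = skewGamma q y k * (q ^ y - q ^ (2 * k)) := by
  rw [skewGamma, Finset.prod_range_succ, rpow_two_mul_natCast, skewGamma]

theorem skewGamma_add_two_succ {q : ℝ} (hq : 0 < q) (y : ℝ) (k : ℕ) :
    skewGamma q (y + 2) (k + 1) = (q ^ (y + 2) - 1) * q ^ (2 * k) * skewGamma q y k := by
  have hy : q ^ (y + 2) = q ^ y * q ^ 2 := by rw [Real.rpow_add hq, Real.rpow_two]
  induction k with
  | zero => simp [skewGamma_succ]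
  | succ k ih =>
    rw [skewGamma_succ, ih, skewGamma_succ, hy]
    ring

theorem skewGamma_add_two_succ_sub {q : ℝ} (hq : 0 < q) (y : ℝ) (k : ℕ) :
    skewGamma q (y + 2) (k + 1) - q ^ (2 * (k + 1)) * skewGamma q y (k + 1)
      = q ^ (2 * k) * (q ^ (2 * (k + 1)) - 1) * skewGamma q y k := by
  have hy : q ^ (y + 2) = q ^ y * q ^ 2 := by rw [Real.rpow_add hq, Real.rpow_two]
  rw [skewGamma_add_two_succ hq, skewGamma_succ, hy]
  ring

theorem skewGamma_two_mul_succ_self {q : ℝ} (hq : 0 < q) (k : ℕ) :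
    skewGamma q (2 * (k + 1 : ℕ)) (k + 1)
      = q ^ (2 * k) * (q ^ (2 * (k + 1)) - 1) * skewGamma q (2 * k) k := by
  have hcast : 2 * ((k + 1 : ℕ) : ℝ) = 2 * k + 2 := by push_cast; ring
  rw [← rpow_two_mul_natCast q (k + 1), hcast, skewGamma_add_two_succ hq]
  ring

theorem skewGamma_two_mul_self_ne_zero {q : ℝ} (hq : 0 < q) (hq1 : q ≠ 1) (k : ℕ) :
    skewGamma q (2 * k) k ≠ 0 := by
  refine Finset.prod_ne_zero_iff.2 fun i hi => sub_ne_zero.2 fun h => ?_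
  have hki : (k : ℝ) = i := mul_left_cancel₀ two_ne_zero ((Real.rpow_right_inj hq hq1).1 h)
  exact (Finset.mem_range.1 hi).ne' (Nat.cast_injective hki)

theorem pow_mul_pow_sub_one_ne_zero {q : ℝ} (hq : 0 < q) (hq1 : q ≠ 1) (k : ℕ) :
    q ^ (2 * k) * (q ^ (2 * (k + 1)) - 1) ≠ 0 :=
  left_ne_zero_of_mul <|
    skewGamma_two_mul_succ_self hq k ▸ skewGamma_two_mul_self_ne_zero hq hq1 (k + 1)

@[simp]
theorem gaussQ_zero (q y : ℝ) : gaussQ q y 0 = 1 := by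
  simp [gaussQ]

theorem gaussQ_eq_div (q y : ℝ) (k : ℕ) :
    gaussQ q y k = skewGamma q (2 * y) k / skewGamma q (2 * k) k := by
  rw [gaussQ, Finset.prod_div_distrib, skewGamma, skewGamma]

theorem mul_gaussQ_succ {q : ℝ} (hq : 0 < q) (hq1 : q ≠ 1) (y : ℝ) (k : ℕ) :
    q ^ (2 * k) * (q ^ (2 * (k + 1)) - 1) * gaussQ q y (k + 1)
      = (q ^ (2 * y) - q ^ (2 * k)) * gaussQ q y k := by
  rw [gaussQ_eq_div, gaussQ_eq_div, skewGamma_two_mul_succ_self hq, skewGamma_succ,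
    ← mul_div_assoc, mul_div_mul_left _ _ (pow_mul_pow_sub_one_ne_zero hq hq1 k)]
  ring

theorem gaussQ_add_one_succ {q : ℝ} (hq : 0 < q) (hq1 : q ≠ 1) (y : ℝ) (k : ℕ) :
    gaussQ q (y + 1) (k + 1) = gaussQ q y k + q ^ (2 * (k + 1)) * gaussQ q y (k + 1) := by
  rw [← sub_eq_iff_eq_add, gaussQ_eq_div, gaussQ_eq_div, gaussQ_eq_div, ← mul_div_assoc,
    ← sub_div, mul_add, mul_one, skewGamma_add_two_succ_sub hq, skewGamma_two_mul_succ_self hq,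
    mul_div_mul_left _ _ (pow_mul_pow_sub_one_ne_zero hq hq1 k)]

open Finset.HasAntidiagonal (antidiagonal mem_antidiagonal)

/-- The summand of the skew-q-Krawtchouk polynomial `C_k(x,n;m)` of index `j`, as a function of
`j` and `l = k - j`, so that `C_k` becomes a sum over the antidiagonal `j + l = k`. The
subtraction `n - x` in the exponent is truncated, as in `CK`. -/
noncomputable def krawtchoukTerm (q m : ℝ) (n x j l : ℕ) : ℝ :=
  (-1 : ℝ) ^ j * q ^ (2 * j * (n - x)) * q ^ (j * (j - 1)) *
    gaussQ q (x : ℝ) j * gaussQ q ((n : ℝ) - (x : ℝ)) l * skewGamma q (m - 2 * (j : ℝ)) l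

theorem CK_eq_sum_antidiagonal (q m : ℝ) (n x k : ℕ) :
    CK q m n x k = ∑ p ∈ antidiagonal k, krawtchoukTerm q m n x p.1 p.2 := by
  rw [Finset.Nat.sum_antidiagonal_eq_sum_range_succ_mk]
  rfl

theorem krawtchoukTerm_zero_right (q m m' : ℝ) (n x j : ℕ) :
    krawtchoukTerm q m n x j 0 = krawtchoukTerm q m' n x j 0 := by
  simp only [krawtchoukTerm, skewGamma_zero]

theorem krawtchoukTerm_add_one_zero_left (q m : ℝ) (n x l : ℕ) :
    krawtchoukTerm q m (n + 1) (x + 1) 0 l = krawtchoukTerm q m n x 0 l := by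
  simp [krawtchoukTerm]

theorem krawtchoukTerm_add_one_succ_left {q : ℝ} (hq : 0 < q) (hq1 : q ≠ 1) (m : ℝ)
    (n x j l : ℕ) :
    krawtchoukTerm q (m + 2) (n + 1) (x + 1) (j + 1) l
      = q ^ (2 * (j + 1)) * krawtchoukTerm q (m + 2) n x (j + 1) l
        - q ^ (2 * (n - x)) * (q ^ (2 * j) * krawtchoukTerm q m n x j l) := by
  have hsub : ((n + 1 : ℕ) : ℝ) - ((x + 1 : ℕ) : ℝ) = n - x := by push_cast; ring
  have hm : m + 2 - 2 * ((j + 1 : ℕ) : ℝ) = m - 2 * j := by push_cast; ring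
  have hj : (j + 1) * (j + 1 - 1) = j * (j - 1) + 2 * j := by cases j <;> grind
  simp only [krawtchoukTerm, hsub, hm, hj, pow_add q (j * (j - 1)), Nat.add_sub_add_right]
  rw [Nat.cast_succ, gaussQ_add_one_succ hq hq1]
  ring

theorem krawtchoukTerm_add_two_succ_right_sub {q : ℝ} (hq : 0 < q) (hq1 : q ≠ 1) (m : ℝ)
    {n x : ℕ} (hx : x ≤ n) (j l : ℕ) :
    krawtchoukTerm q (m + 2) n x j (l + 1)
        - q ^ (2 * (l + 1)) * krawtchoukTerm q m n x j (l + 1)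
      = (q ^ (2 * (n - x)) - q ^ (2 * l)) * krawtchoukTerm q m n x j l := by
  have hm : m + 2 - 2 * (j : ℝ) = m - 2 * j + 2 := by ring
  have hgamma := skewGamma_add_two_succ_sub hq (m - 2 * j) l
  have hratio := mul_gaussQ_succ hq hq1 ((n : ℝ) - x) l
  rw [← Nat.cast_sub hx, rpow_two_mul_natCast, Nat.cast_sub hx] at hratio
  simp only [krawtchoukTerm, hm]
  linear_combination (-1 : ℝ) ^ j * q ^ (2 * j * (n - x)) * q ^ (j * (j - 1)) * gaussQ q x j *
    (gaussQ q ((n : ℝ) - x) (l + 1) * hgamma + skewGamma q (m - 2 * j) l * hratio)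

theorem CK_add_one_succ {q : ℝ} (hq : 0 < q) (hq1 : q ≠ 1) (m : ℝ) (n x k : ℕ) :
    CK q (m + 2) (n + 1) (x + 1) (k + 1)
      = ∑ p ∈ antidiagonal (k + 1), q ^ (2 * p.1) * krawtchoukTerm q (m + 2) n x p.1 p.2
        - q ^ (2 * (n - x)) *
          ∑ p ∈ antidiagonal k, q ^ (2 * p.1) * krawtchoukTerm q m n x p.1 p.2 := by
  simp only [CK_eq_sum_antidiagonal, Finset.Nat.sum_antidiagonal_succ,
    krawtchoukTerm_add_one_zero_left, krawtchoukTerm_add_one_succ_left hq hq1,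
    Finset.sum_sub_distrib, Finset.mul_sum]
  ring

theorem stmt2_general {q : ℝ} (hq : 0 < q) (hq1 : q ≠ 1) (m : ℝ) {n x : ℕ} (hx : x ≤ n)
    (k : ℕ) :
    CK q (m + 2) (n + 1) (x + 1) (k + 1)
      = q ^ (2 * (k + 1)) * CK q m n x (k + 1) - q ^ (2 * k) * CK q m n x k := by
  have hterm : ∀ p ∈ antidiagonal k,
      q ^ (2 * p.1) * krawtchoukTerm q (m + 2) n x p.1 (p.2 + 1)
        = q ^ (2 * (k + 1)) * krawtchoukTerm q m n x p.1 (p.2 + 1)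
          - q ^ (2 * k) * krawtchoukTerm q m n x p.1 p.2
          + q ^ (2 * (n - x)) * (q ^ (2 * p.1) * krawtchoukTerm q m n x p.1 p.2) := by
    rintro ⟨j, l⟩ hjl
    obtain rfl : j + l = k := mem_antidiagonal.1 hjl
    linear_combination q ^ (2 * j) * krawtchoukTerm_add_two_succ_right_sub hq hq1 m hx j l
  rw [CK_add_one_succ hq hq1, CK_eq_sum_antidiagonal, CK_eq_sum_antidiagonal,
    Finset.Nat.sum_antidiagonal_succ', Finset.Nat.sum_antidiagonal_succ',
    krawtchoukTerm_zero_right q (m + 2) m, Finset.sum_congr rfl hterm]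
  simp only [Finset.sum_add_distrib, Finset.sum_sub_distrib, ← Finset.mul_sum]
  ring

theorem stmt2 (q : ℝ) (hq : 1 < q) (m : ℝ) (n x k : ℕ) (hx : x ≤ n) (hk : k ≤ n) :
    CK q (m + 2) (n + 1) (x + 1) (k + 1)
      = q ^ (2 * (k + 1)) * CK q m n x (k + 1) - q ^ (2 * k) * CK q m n x k :=
  stmt2_general (zero_lt_one.trans hq) hq.ne' m hx k
end

section
/- (Leibniz rule for the skew-q^{-1}-derivative.) Let q > 1 be real, r, s naturals, and f, g : ℕ → ℝ → ℝ coefficient families with f_i = 0 for i > r and g_i = 0 for i > s. For a degree-d family h define its ℓ-th skew-q^{-1}-derivative family (of degree d−ℓ) by h^{{ℓ}}_j(λ) = h_{j+ℓ}(λ) q^{2(ℓ(1−(j+ℓ))+σ_ℓ)} β(j+ℓ, ℓ). Then for every natural φ, every real λ, every X ∈ ℝ and every Y ≠ 0: the φ-fold skew-q^{-1}-derivative in Y of the function Y ↦ Σ_{u=0}^{r+s} (Σ_{i=0}^{u} q^{2is} f_i(λ) g_{u−i}(λ−2i)) Y^u X^{r+s−u} equals Σ_{ℓ=0}^{φ}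 [φ;ℓ] q^{2ℓ(s−φ+ℓ)} Σ_{u=0}^{r+s−φ} (Σ_{i=0}^{u} q^{2i(s−(φ−ℓ))} f^{{ℓ}}_i(λ) g^{{φ−ℓ}}_{u−i}(λ−2ℓ−2i)) Y^u X^{r+s−φ−u}, where f^{{ℓ}} has degree r−ℓ and g^{{φ−ℓ}} has degree s−(φ−ℓ). -/
/-- The skew-q-nary Beta function `β(x,k)`. -/
noncomputable def betaQ (q x : ℝ) (k : ℕ) : ℝ :=
  ∏ i ∈ Finset.range k, (q ^ (2 * (x - (i : ℝ))) - 1) / (q ^ 2 - 1)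

/-- The skew-q⁻¹-derivative operator. -/
noncomputable def qInvDeriv (q : ℝ) (h : ℝ → ℝ) : ℝ → ℝ :=
  fun Y => (h ((q ^ 2)⁻¹ * Y) - h Y) / (((q ^ 2)⁻¹ - 1) * Y)

/-- The `ℓ`-th skew-q⁻¹-derivative of a coefficient family:
`h^{{ℓ}}_j(λ) = h_{j+ℓ}(λ) q^{2(ℓ(1−(j+ℓ))+σ_ℓ)} β(j+ℓ, ℓ)`. -/
noncomputable def invDerivFam (q : ℝ) (h : ℕ → ℝ → ℝ) (ℓ : ℕ) : ℕ → ℝ → ℝ :=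
  fun j lam => h (j + ℓ) lam *
    q ^ (2 * ((ℓ : ℝ) * (1 - ((j : ℝ) + (ℓ : ℝ))) + (ℓ : ℝ) * ((ℓ : ℝ) - 1) / 2)) *
    betaQ q ((j : ℝ) + (ℓ : ℝ)) ℓ

/-!
Put `p = q²` and `t = q⁻²`. The `k`-fold derivative multiplies `Y^n` by
`(t^n; p)_k / (1 - t)^k · Y^(-k)`, and the paper's `q^{2(k(1-n)+σ_k)} β(n,k)` is exactly this
factor. Since `t^(i+j) = t^i t^j`, the Leibniz rule for the monomial `Y^i · Y^j` is the Vandermonde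
identity `(ab; p)_n = ∑_{l+m=n} [n;l] a^m (a; p)_l (b; p)_m` for `q`-Pochhammer symbols, a
consequence of the Pascal rule for Gaussian coefficients. A skew product is a sum of such monomials
with scalar weights, and the factors for `i < l` or `j < m` vanish, so that shifting the indices by
`(l, m)` turns the differentiated product into skew products of the derivatives.
-/

section BigOperators

open Finset

lemma sum_antidiagonal_add {M : Type*} [AddCommMonoid M] (F : ℕ → ℕ → M) (u l m : ℕ)
    (hl : ∀ i j, i < l → F i j = 0) (hm : ∀ i j, j < m → F i j = 0) :
    ∑ ij ∈ antidiagonal (u + (l + m)), F ij.1 ij.2 =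
      ∑ ij ∈ antidiagonal u, F (ij.1 + l) (ij.2 + m) := by
  symm
  refine sum_of_injOn (fun ij => (ij.1 + l, ij.2 + m)) ?_ ?_ ?_ fun _ _ => rfl
  · rintro ⟨i, j⟩ - ⟨i', j'⟩ - h
    simpa using h
  · rintro ⟨i, j⟩ h
    simp only [mem_coe, HasAntidiagonal.mem_antidiagonal] at h ⊢
    omega
  · rintro ⟨i, j⟩ h hnotMem
    rw [HasAntidiagonal.mem_antidiagonal] at h
    by_contra hne_zero
    have hi : l ≤ i := not_lt.1 fun hi => hne_zero (hl i j hi)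
    have hj : m ≤ j := not_lt.1 fun hj => hne_zero (hm i j hj)
    refine hnotMem ⟨(i - l, j - m), ?_, by ext <;> simp [hi, hj]⟩
    simp only [mem_coe, HasAntidiagonal.mem_antidiagonal]
    omega

lemma zpow_mul_add_choose_two {G : Type*} [CommGroupWithZero G] {p : G} (hp : p ≠ 0) (a : ℤ)
    (k : ℕ) :
    p ^ (k * a + k.choose 2 : ℤ) = ∏ i ∈ range k, p ^ (a + i) := by
  induction k with
  | zero => simp
  | succ k ih =>
    rw [prod_range_succ, ← ih, ← zpow_add₀ hp, Nat.choose_succ_succ' k 1, Nat.choose_one_right]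
    push_cast
    ring_nf

end BigOperators

section GaussianBinomial

open Finset Finset.Nat

variable {R K : Type*} [CommRing R] [Field K] {p : K}

/-- The `q`-Pochhammer symbol `(a; p)_n = ∏_{i<n} (1 - a p^i)`, which up to powers of `1 - q⁻²` is
the coefficient produced by iterating the skew-q⁻¹-derivative. -/
def qPochhammer (a p : R) (n : ℕ) : R :=
  ∏ i ∈ range n, (1 - a * p ^ i)

@[simp]
lemma qPochhammer_zero (a p : R) : qPochhammer a p 0 = 1 := prod_range_zero _

lemma qPochhammer_succ (a p : R) (n : ℕ) :
    qPochhammer a p (n + 1) = qPochhammer a p n * (1 - a * p ^ n) :=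
  prod_range_succ _ _

/-- The Gaussian binomial coefficient `[n;k]` with base `p` and natural `n`, in an arbitrary field;
`gaussQ q n k` is its value at `p = q²`. -/
def gaussBinom (p : K) (n k : ℕ) : K :=
  ∏ i ∈ range k, (p ^ n - p ^ i) / (p ^ k - p ^ i)

@[simp]
lemma gaussBinom_zero_right (p : K) (n : ℕ) : gaussBinom p n 0 = 1 := prod_range_zero _

lemma gaussBinom_eq_zero_of_lt (p : K) {n k : ℕ} (h : n < k) : gaussBinom p n k = 0 :=
  prod_eq_zero (mem_range.2 h) (by rw [sub_self, zero_div])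

lemma prod_range_succ_pow_sub_pow (p : R) (n k : ℕ) :
    ∏ i ∈ range (k + 1), (p ^ (n + 1) - p ^ i) =
      (p ^ (n + 1) - 1) * (p ^ k * ∏ i ∈ range k, (p ^ n - p ^ i)) := by
  simp only [prod_range_succ', pow_succ' p, ← mul_sub, prod_mul_distrib, prod_const, card_range,
    pow_zero]
  ring

lemma gaussBinom_succ_succ (hp : Function.Injective (p ^ · : ℕ → K)) (n k : ℕ) :
    gaussBinom p (n + 1) (k + 1) = p ^ (k + 1) * gaussBinom p n (k + 1) + gaussBinom p n k := by
  have hp₀ : p ≠ 0 := by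
    rintro rfl
    exact absurd (hp (a₁ := 1) (a₂ := 2) (by simp)) (by decide)
  have hk : p ^ (k + 1) - 1 ≠ 0 := by
    simpa only [pow_zero] using sub_ne_zero.2 (hp.ne k.succ_ne_zero)
  have hden : ∏ i ∈ range k, (p ^ k - p ^ i) ≠ 0 :=
    prod_ne_zero_iff.2 fun i hi => sub_ne_zero.2 (hp.ne (mem_range.1 hi).ne')
  simp only [gaussBinom, prod_div_distrib]
  rw [prod_range_succ_pow_sub_pow, prod_range_succ_pow_sub_pow, prod_range_succ]
  field_simp
  ring

theorem qPochhammer_mul (hp : Function.Injective (p ^ · : ℕ → K)) (a b : K) (n : ℕ) :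
    qPochhammer (a * b) p n = ∑ lm ∈ antidiagonal n,
      gaussBinom p n lm.1 * a ^ lm.2 * qPochhammer a p lm.1 * qPochhammer b p lm.2 := by
  induction n with
  | zero => simp
  | succ n ih =>
    let F (lm : ℕ × ℕ) : K :=
      p ^ lm.1 * gaussBinom p n lm.1 * a ^ lm.2 * qPochhammer a p lm.1 * qPochhammer b p lm.2
    let G (lm : ℕ × ℕ) : K :=
      gaussBinom p n lm.1 * a ^ lm.2 * qPochhammer a p (lm.1 + 1) * qPochhammer b p lm.2
    -- `1 - a b p^(l+m) = a p^l (1 - b p^m) + (1 - a p^l)` produces the two families of terms.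
    have split_last_factor : qPochhammer (a * b) p (n + 1) =
        ∑ lm ∈ antidiagonal n, (F (lm.1, lm.2 + 1) + G lm) := by
      rw [qPochhammer_succ, ih, sum_mul]
      refine sum_congr rfl fun lm hlm => ?_
      simp only [F, G, ← mem_antidiagonal.1 hlm, qPochhammer_succ]
      ring
    have sum_F_shift : ∑ lm ∈ antidiagonal n, F (lm.1, lm.2 + 1) =
        F (0, n + 1) + ∑ lm ∈ antidiagonal n, F (lm.1 + 1, lm.2) := by
      have hF : F (n + 1, 0) = 0 := by
        simp only [F, gaussBinom_eq_zero_of_lt p n.lt_succ_self, mul_zero, zero_mul]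
      rw [← sum_antidiagonal_succ, sum_antidiagonal_succ', hF, zero_add]
    rw [split_last_factor, sum_add_distrib, sum_F_shift, add_assoc, ← sum_add_distrib,
      sum_antidiagonal_succ]
    congr 1
    · simp [F]
    · exact sum_congr rfl fun lm _ => by
        simp only [F, G, gaussBinom_succ_succ hp]
        ring

end GaussianBinomial

section SkewDerivative

open Finset Finset.Nat

variable {q : ℝ}

/-- The coefficient of `Y^(n-k)` in the `k`-fold skew-q⁻¹-derivative of `Y^n`. -/
noncomputable def invDerivCoeff (q : ℝ) (n k : ℕ) : ℝ :=
  qPochhammer ((q ^ 2)⁻¹ ^ n) (q ^ 2) k / (1 - (q ^ 2)⁻¹) ^ k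

lemma invDerivCoeff_eq_zero_of_lt (hq₀ : q ≠ 0) {n k : ℕ} (h : n < k) :
    invDerivCoeff q n k = 0 := by
  have hfactor : 1 - (q ^ 2)⁻¹ ^ n * (q ^ 2) ^ n = 0 := by
    rw [inv_pow, inv_mul_cancel₀ (pow_ne_zero n (pow_ne_zero 2 hq₀)), sub_self]
  rw [invDerivCoeff, qPochhammer, prod_eq_zero (mem_range.2 h) hfactor, zero_div]

/-- Every exponent of `q` in the Leibniz rule has this form, so that `Real.rpow` is an honest power
even for negative `q`. -/
lemma rpow_two_mul_intCast (q : ℝ) (n : ℤ) : q ^ (2 * (n : ℝ)) = (q ^ 2) ^ n := by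
  rw [← zpow_natCast, ← zpow_mul, ← Real.rpow_intCast]
  push_cast
  rfl

lemma gaussQ_natCast (q : ℝ) (n k : ℕ) : gaussQ q n k = gaussBinom (q ^ 2) n k := by
  have rpow_eq (m : ℕ) : q ^ (2 * (m : ℝ)) = (q ^ 2) ^ m := by
    simpa using rpow_two_mul_intCast q m
  simp only [gaussQ, gaussBinom, rpow_eq]

lemma sq_pow_injective (hq₀ : q ≠ 0) (hq : q ^ 2 ≠ 1) :
    Function.Injective ((q ^ 2) ^ · : ℕ → ℝ) :=
  pow_right_injective₀ (by positivity) hq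

lemma invDerivCoeff_add (hq₀ : q ≠ 0) (hq : q ^ 2 ≠ 1) (i j n : ℕ) :
    invDerivCoeff q (i + j) n = ∑ lm ∈ antidiagonal n,
      gaussQ q n lm.1 * ((q ^ 2)⁻¹ ^ i) ^ lm.2 *
        invDerivCoeff q i lm.1 * invDerivCoeff q j lm.2 := by
  rw [invDerivCoeff, pow_add, qPochhammer_mul (sq_pow_injective hq₀ hq), sum_div]
  refine sum_congr rfl fun lm hlm => ?_
  rw [gaussQ_natCast, invDerivCoeff, invDerivCoeff, ← mem_antidiagonal.1 hlm, pow_add]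
  field

lemma rpow_mul_betaQ (hq₀ : q ≠ 0) (hq : q ^ 2 ≠ 1) (n k : ℕ) :
    q ^ (2 * ((k : ℝ) * (1 - (n : ℝ)) + (k : ℝ) * ((k : ℝ) - 1) / 2)) * betaQ q n k =
      invDerivCoeff q n k := by
  have hp₀ : q ^ 2 ≠ 0 := pow_ne_zero 2 hq₀
  have hexp : (k : ℝ) * (1 - (n : ℝ)) + (k : ℝ) * ((k : ℝ) - 1) / 2 =
      ((k * (1 - n) + k.choose 2 : ℤ) : ℝ) := by
    push_cast [Nat.cast_choose_two]
    ring
  have hbeta (i : ℕ) : q ^ (2 * ((n : ℝ) - i)) = (q ^ 2) ^ (n - i : ℤ) := by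
    rw [← rpow_two_mul_intCast]
    push_cast
    rfl
  have hfactor (i : ℕ) : (q ^ 2) ^ (1 - n + i : ℤ) * (((q ^ 2) ^ (n - i : ℤ) - 1) / (q ^ 2 - 1)) =
      (1 - (q ^ 2)⁻¹ ^ n * (q ^ 2) ^ i) / (1 - (q ^ 2)⁻¹) := by
    have hden : q ^ 2 - 1 ≠ 0 := sub_ne_zero.2 hq
    have hden' : 1 - (q ^ 2)⁻¹ ≠ 0 := sub_ne_zero.2 (inv_ne_one.2 hq).symm
    rw [zpow_add₀ hp₀, zpow_sub₀ hp₀, zpow_sub₀ hp₀, zpow_one, zpow_natCast, zpow_natCast, inv_pow]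
    generalize q ^ 2 = p at *
    field
  rw [hexp, rpow_two_mul_intCast, zpow_mul_add_choose_two hp₀, betaQ, ← prod_mul_distrib]
  simp only [hbeta, hfactor, prod_div_distrib, prod_const, card_range]
  rfl

lemma invDerivFam_eq (hq₀ : q ≠ 0) (hq : q ^ 2 ≠ 1) (h : ℕ → ℝ → ℝ) (k j : ℕ) (lam : ℝ) :
    invDerivFam q h k j lam = h (j + k) lam * invDerivCoeff q (j + k) k := by
  rw [← rpow_mul_betaQ hq₀ hq, invDerivFam, Nat.cast_add, mul_assoc]

lemma qInvDeriv_iterate_sum (q : ℝ) {ι : Type*} (s : Finset ι) (c : ι → ℝ) (F : ι → ℝ → ℝ)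
    (k : ℕ) : (qInvDeriv q)^[k] (fun Z => ∑ u ∈ s, c u * F u Z) =
      fun Y => ∑ u ∈ s, c u * (qInvDeriv q)^[k] (F u) Y := by
  induction k with
  | zero => rfl
  | succ k ih =>
    funext Y
    simp only [Function.iterate_succ_apply', ih, qInvDeriv, ← sum_sub_distrib, ← mul_sub, sum_div,
      mul_div_assoc]

lemma qInvDeriv_iterate_pow (hq₀ : q ≠ 0) (hq : q ^ 2 ≠ 1) (n k : ℕ) {Y : ℝ} (hY : Y ≠ 0) :
    (qInvDeriv q)^[k] (fun Z => Z ^ n) Y = invDerivCoeff q n k * Y ^ (n - k : ℤ) := by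
  have hp₀ : q ^ 2 ≠ 0 := pow_ne_zero 2 hq₀
  have ht : (q ^ 2)⁻¹ ≠ 1 := inv_ne_one.2 hq
  induction k generalizing Y with
  | zero => simp [invDerivCoeff]
  | succ k ih =>
    have hexp : (n - (k + 1 : ℕ) : ℤ) = n - k - 1 := by push_cast; ring
    have hscale : (q ^ 2)⁻¹ ^ (n - k : ℤ) = (q ^ 2)⁻¹ ^ n * (q ^ 2) ^ k := by
      rw [zpow_sub₀ (inv_ne_zero hp₀), zpow_natCast, zpow_natCast, inv_pow _ k, div_inv_eq_mul]
    rw [Function.iterate_succ_apply', qInvDeriv, ih (mul_ne_zero (inv_ne_zero hp₀) hY), ih hY,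
      mul_zpow, hscale, hexp, zpow_sub_one₀ hY, invDerivCoeff, invDerivCoeff, qPochhammer_succ,
      pow_succ (1 - _)]
    have hden : (q ^ 2)⁻¹ - 1 ≠ 0 := sub_ne_zero.2 ht
    have hden' : 1 - (q ^ 2)⁻¹ ≠ 0 := sub_ne_zero.2 ht.symm
    generalize (q ^ 2)⁻¹ = t at *
    field

lemma qInvDeriv_iterate_homogeneous (hq₀ : q ≠ 0) (hq : q ^ 2 ≠ 1) {N : ℕ} {h : ℕ → ℝ → ℝ}
    {lam : ℝ} (hN : ∀ u, N < u → h u lam = 0) (k : ℕ) (X : ℝ) {Y : ℝ} (hY : Y ≠ 0) :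
    (qInvDeriv q)^[k] (fun Z => ∑ u ∈ range (N + 1), h u lam * Z ^ u * X ^ (N - u)) Y =
      ∑ u ∈ range (N - k + 1), invDerivFam q h k u lam * Y ^ u * X ^ (N - k - u) := by
  simp only [mul_right_comm _ (_ ^ _) (X ^ _)]
  simp only [qInvDeriv_iterate_sum, qInvDeriv_iterate_pow hq₀ hq _ _ hY]
  have hlow (u : ℕ) (hu : u < k) :
      h u lam * X ^ (N - u) * (invDerivCoeff q u k * Y ^ (u - k : ℤ)) = 0 := by
    rw [invDerivCoeff_eq_zero_of_lt hq₀ hu, zero_mul, mul_zero]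
  rcases le_or_gt k N with hk | hk
  · obtain ⟨M, rfl⟩ := Nat.exists_eq_add_of_le hk
    rw [add_assoc, sum_range_add, sum_eq_zero fun u hu => hlow u (mem_range.1 hu), zero_add,
      Nat.add_sub_cancel_left]
    refine sum_congr rfl fun u _ => ?_
    rw [invDerivFam_eq hq₀ hq, Nat.add_sub_add_left, add_comm k u, Nat.cast_add,
      add_sub_cancel_right, zpow_natCast]
    ring
  · -- Truncated subtraction leaves the term `u = 0` on the right, which vanishes because of `hN`.
    rw [sum_eq_zero fun u hu => hlow u ((Nat.lt_succ_iff.1 (mem_range.1 hu)).trans_lt hk)]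
    simp [Nat.sub_eq_zero_of_le hk.le, invDerivFam, hN k hk]

/-- The coefficients of the skew product of the families `f` and `g`, for an arbitrary real weight
`w` in place of the paper's `q^{2s}`, where `s` is the degree of the right factor. -/
def skewMul (w : ℝ) (f g : ℕ → ℝ → ℝ) : ℕ → ℝ → ℝ :=
  fun u lam => ∑ ij ∈ antidiagonal u, w ^ ij.1 * f ij.1 lam * g ij.2 (lam - 2 * (ij.1 : ℝ))

lemma skewMul_eq_sum_range (w : ℝ) (f g : ℕ → ℝ → ℝ) (u : ℕ) (lam : ℝ) :
    skewMul w f g u lam =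
      ∑ i ∈ range (u + 1), w ^ i * f i lam * g (u - i) (lam - 2 * (i : ℝ)) :=
  sum_antidiagonal_eq_sum_range_succ_mk _ u

lemma skewMul_eq_zero_of_lt {r s : ℕ} {f g : ℕ → ℝ → ℝ} (hf : ∀ i, r < i → ∀ lam, f i lam = 0)
    (hg : ∀ i, s < i → ∀ lam, g i lam = 0) (w : ℝ) {u : ℕ} (hu : r + s < u) (lam : ℝ) :
    skewMul w f g u lam = 0 := by
  refine sum_eq_zero fun ij hij => ?_
  rw [HasAntidiagonal.mem_antidiagonal] at hij
  rcases lt_or_ge r ij.1 with hi | hi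
  · rw [hf _ hi, mul_zero, zero_mul]
  · rw [hg _ (by omega), mul_zero]

lemma pow_mul_skewMul_invDerivFam (hq₀ : q ≠ 0) (hq : q ^ 2 ≠ 1) (w : ℝ) (f g : ℕ → ℝ → ℝ)
    (l m u : ℕ) (lam : ℝ) :
    w ^ l * skewMul w (invDerivFam q f l) (fun j x => invDerivFam q g m j (x - 2 * (l : ℝ))) u lam =
      ∑ ij ∈ antidiagonal (u + (l + m)),
        w ^ ij.1 * (f ij.1 lam * invDerivCoeff q ij.1 l) *
          (g ij.2 (lam - 2 * (ij.1 : ℝ)) * invDerivCoeff q ij.2 m) := by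
  rw [sum_antidiagonal_add (fun i j => w ^ i * (f i lam * invDerivCoeff q i l) *
    (g j (lam - 2 * (i : ℝ)) * invDerivCoeff q j m)), skewMul, mul_sum]
  · refine sum_congr rfl fun ij _ => ?_
    rw [invDerivFam_eq hq₀ hq, invDerivFam_eq hq₀ hq, pow_add, Nat.cast_add, mul_add, ← sub_sub]
    ring
  · intro i j hi
    rw [invDerivCoeff_eq_zero_of_lt hq₀ hi, mul_zero, mul_zero, zero_mul]
  · intro i j hj
    rw [invDerivCoeff_eq_zero_of_lt hq₀ hj, mul_zero, mul_zero]

theorem invDerivFam_skewMul (hq₀ : q ≠ 0) (hq : q ^ 2 ≠ 1) (w : ℝ) (f g : ℕ → ℝ → ℝ)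
    (k u : ℕ) (lam : ℝ) :
    invDerivFam q (skewMul w f g) k u lam = ∑ lm ∈ antidiagonal k,
      gaussQ q k lm.1 * (w * (q ^ 2)⁻¹ ^ lm.2) ^ lm.1 *
        skewMul (w * (q ^ 2)⁻¹ ^ lm.2) (invDerivFam q f lm.1)
          (fun j x => invDerivFam q g lm.2 j (x - 2 * (lm.1 : ℝ))) u lam := by
  simp only [mul_assoc (gaussQ q _ _), pow_mul_skewMul_invDerivFam hq₀ hq, mul_sum]
  rw [invDerivFam_eq hq₀ hq, skewMul, sum_mul]
  -- The Vandermonde factor `(t^i)^m`, with `t = q⁻²`, is absorbed into the weight `w^i`.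
  have hexpand (ij : ℕ × ℕ) (hij : ij ∈ antidiagonal (u + k)) :
      w ^ ij.1 * f ij.1 lam * g ij.2 (lam - 2 * (ij.1 : ℝ)) * invDerivCoeff q (u + k) k =
        ∑ lm ∈ antidiagonal k, gaussQ q k lm.1 *
          ((w * (q ^ 2)⁻¹ ^ lm.2) ^ ij.1 * (f ij.1 lam * invDerivCoeff q ij.1 lm.1) *
            (g ij.2 (lam - 2 * (ij.1 : ℝ)) * invDerivCoeff q ij.2 lm.2)) := by
    rw [← HasAntidiagonal.mem_antidiagonal.1 hij, invDerivCoeff_add hq₀ hq, mul_sum]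
    refine sum_congr rfl fun lm _ => ?_
    ring
  rw [sum_congr rfl hexpand, sum_comm]
  refine sum_congr rfl fun lm hlm => ?_
  rw [HasAntidiagonal.mem_antidiagonal.1 hlm]

lemma rpow_two_mul_mul_sub (hq₀ : q ≠ 0) (s i m : ℕ) :
    q ^ (2 * (i : ℝ) * ((s : ℝ) - m)) = ((q ^ 2) ^ s * (q ^ 2)⁻¹ ^ m) ^ i := by
  have hcast : 2 * (i : ℝ) * ((s : ℝ) - m) = 2 * (((s - m) * i : ℤ) : ℝ) := by
    push_cast
    ring
  rw [hcast, rpow_two_mul_intCast, zpow_mul, zpow_sub₀ (pow_ne_zero 2 hq₀), inv_pow,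
    ← div_eq_mul_inv]
  simp only [zpow_natCast]

end SkewDerivative

theorem stmt9_general (q : ℝ) (hq₀ : q ≠ 0) (hq : q ^ 2 ≠ 1) (r s : ℕ) (f g : ℕ → ℝ → ℝ)
    (hf : ∀ i, r < i → ∀ lam, f i lam = 0) (hg : ∀ i, s < i → ∀ lam, g i lam = 0)
    (φ : ℕ) (lam X Y : ℝ) (hY : Y ≠ 0) :
    ((qInvDeriv q)^[φ] (fun Z => ∑ u ∈ Finset.range (r + s + 1),
          (∑ i ∈ Finset.range (u + 1), q ^ (2 * i * s) * f i lam * g (u - i) (lam - 2 * (i : ℝ)))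
            * Z ^ u * X ^ (r + s - u))) Y
      = ∑ ℓ ∈ Finset.range (φ + 1),
          gaussQ q (φ : ℝ) ℓ * q ^ (2 * (ℓ : ℝ) * ((s : ℝ) - (φ : ℝ) + (ℓ : ℝ))) *
            ∑ u ∈ Finset.range ((r + s - φ) + 1),
              (∑ i ∈ Finset.range (u + 1),
                  q ^ (2 * (i : ℝ) * ((s : ℝ) - ((φ : ℝ) - (ℓ : ℝ)))) *
                    invDerivFam q f ℓ i lam *
                    invDerivFam q g (φ - ℓ) (u - i) (lam - 2 * (ℓ : ℝ) - 2 * (i : ℝ)))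
                * Y ^ u * X ^ ((r + s - φ) - u) := by
  have hprod (u : ℕ) : ∑ i ∈ Finset.range (u + 1),
      q ^ (2 * i * s) * f i lam * g (u - i) (lam - 2 * (i : ℝ)) =
        skewMul ((q ^ 2) ^ s) f g u lam := by
    rw [skewMul_eq_sum_range]
    exact Finset.sum_congr rfl fun i _ => by rw [mul_right_comm 2 i s, pow_mul, pow_mul]
  calc
    _ = ∑ u ∈ Finset.range (r + s - φ + 1),
          invDerivFam q (skewMul ((q ^ 2) ^ s) f g) φ u lam * Y ^ u * X ^ (r + s - φ - u) := by
      simp only [hprod]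
      exact qInvDeriv_iterate_homogeneous hq₀ hq
        (fun u hu => skewMul_eq_zero_of_lt hf hg _ hu lam) φ X hY
    _ = ∑ l ∈ Finset.range (φ + 1),
          gaussQ q φ l * ((q ^ 2) ^ s * (q ^ 2)⁻¹ ^ (φ - l)) ^ l *
            ∑ u ∈ Finset.range (r + s - φ + 1),
              skewMul ((q ^ 2) ^ s * (q ^ 2)⁻¹ ^ (φ - l)) (invDerivFam q f l)
                (fun j x => invDerivFam q g (φ - l) j (x - 2 * (l : ℝ))) u lam *
                  Y ^ u * X ^ (r + s - φ - u) := by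
      simp only [invDerivFam_skewMul hq₀ hq, Finset.sum_mul, Finset.mul_sum, ← mul_assoc]
      rw [Finset.sum_comm, Finset.Nat.sum_antidiagonal_eq_sum_range_succ_mk]
    _ = _ := by
      refine Finset.sum_congr rfl fun l hl => ?_
      have hφ : (φ : ℝ) - l = (φ - l : ℕ) :=
        (Nat.cast_sub (Nat.lt_succ_iff.1 (Finset.mem_range.1 hl))).symm
      rw [sub_add, hφ, rpow_two_mul_mul_sub hq₀]
      simp only [skewMul_eq_sum_range, rpow_two_mul_mul_sub hq₀, sub_right_comm lam _ (2 * (l : ℝ))]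

/-- Leibniz rule for the skew-q⁻¹-derivative of a skew-q-product. -/
theorem stmt9 (q : ℝ) (hq : 1 < q) (r s : ℕ) (f g : ℕ → ℝ → ℝ)
    (hf : ∀ i, r < i → ∀ lam, f i lam = 0) (hg : ∀ i, s < i → ∀ lam, g i lam = 0)
    (φ : ℕ) (lam X Y : ℝ) (hY : Y ≠ 0) :
    ((qInvDeriv q)^[φ] (fun Z => ∑ u ∈ Finset.range (r + s + 1),
          (∑ i ∈ Finset.range (u + 1), q ^ (2 * i * s) * f i lam * g (u - i) (lam - 2 * (i : ℝ)))
            * Z ^ u * X ^ (r + s - u))) Y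
      = ∑ ℓ ∈ Finset.range (φ + 1),
          gaussQ q (φ : ℝ) ℓ * q ^ (2 * (ℓ : ℝ) * ((s : ℝ) - (φ : ℝ) + (ℓ : ℝ))) *
            ∑ u ∈ Finset.range ((r + s - φ) + 1),
              (∑ i ∈ Finset.range (u + 1),
                  q ^ (2 * (i : ℝ) * ((s : ℝ) - ((φ : ℝ) - (ℓ : ℝ)))) *
                    invDerivFam q f ℓ i lam *
                    invDerivFam q g (φ - ℓ) (u - i) (lam - 2 * (ℓ : ℝ) - 2 * (i : ℝ)))
                * Y ^ u * X ^ ((r + s - φ) - u) :=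
  stmt9_general q (zero_lt_one.trans hq).ne' (one_lt_pow₀ hq two_ne_zero).ne'
    r s f g hf hg φ lam X Y hY
end
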